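/- Let λ=(λ_1,…,λ_r) be a partition and s=(s_{ij})∈W^diag_λ with common diagonal values a_k. Assume Re(s_{i,λ_i})>1 for all 1≤i≤r. Then ζ_λ(s) = det[ ζ⋆(a_{−j+1}, a_{−j+2}, …, a_{−j+(λ_i−i+j)}) ]_{1≤i,j≤r}, where the (i,j) entry is understood to be 1 if λ_i−i+j=0 and 0 if λ_i−i+j<0 (Jacobi–Trudi formula of H-type). -/

import Mathlib

/-!
The proof truncates all series to entries `≤ N`, proves the identity for the truncations by
induction on `N` over an arbitrary commutative ring, and lets `N → ∞`.

Let an entry `m` in a box of content `c` have weight `x m c`, and let `H_N(j, e)` be the truncated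
star sum with arguments of index `-j, …, e - 1`. Splitting off the largest summation variable gives
`H_{N+1}(j, e) = H_N(j, e) + x (N+1) (e-1) * H_{N+1}(j, e-1)`. Iterating this in row `i` of the
Jacobi–Trudi matrix, whose parameter is `e = λ_i - i`, down to `e = λ_{i+1} - (i+1)` writes the row
as a combination of rows of level `N` with parameters `μ_i - i`, `λ_{i+1} ≤ μ_i ≤ λ_i`, plus a
multiple of row `i+1` (or zero, in the last row). The multiples of row `i+1` do not affect the
determinant, and multilinearity turns the rest into a sum over `μ` such that `λ/μ` is a horizontal
strip (`det_jtMatrix_succ`). The truncated Schur sum satisfies the same recursion, because the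
boxes with entry `N+1` of a semi-standard tableau form a horizontal strip (`truncSchur_succ`). For
`N = 0` the matrix is triangular. This proves `truncSchur_eq_det`.

For the limit, a weakly increasing row whose last exponent exceeds `1` is dominated termwise by a
product of `m ^ -(1 + δ)`, since part of the last exponent can be shared with the other, smaller
entries (`row_bound`). So the tableau series and all star series occurring in the determinant
converge absolutely.
-/

open scoped BigOperators

noncomputable section

namespace SMZ

/-- Box `(i,j)` (0-indexed) lies in the Young diagram of the partition `lam`. -/
def InDiag (lam : ℕ → ℕ) (p : ℕ × ℕ) : Prop := p.2 < lam p.1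

/-- `(i,j)` is a corner of the Young diagram of `lam`. -/
def IsCorner (lam : ℕ → ℕ) (p : ℕ × ℕ) : Prop :=
  InDiag lam p ∧ ¬ InDiag lam (p.1 + 1, p.2) ∧ ¬ InDiag lam (p.1, p.2 + 1)

/-- `lam` is the part function of a partition with exactly `r` positive parts. -/
def IsPartitionWith (r : ℕ) (lam : ℕ → ℕ) : Prop :=
  Antitone lam ∧ ∀ i, 0 < lam i ↔ i < r

/-- Semi-standard Young tableau of shape `lam`, normalized to be `0` off the diagram. -/
structure IsSSYT (lam : ℕ → ℕ) (m : ℕ × ℕ → ℕ) : Prop where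
  zero_off : ∀ p, ¬ InDiag lam p → m p = 0
  pos : ∀ p, InDiag lam p → 0 < m p
  row_le : ∀ i j, InDiag lam (i, j + 1) → m (i, j) ≤ m (i, j + 1)
  col_lt : ∀ i j, InDiag lam (i + 1, j) → m (i, j) < m (i + 1, j)

/-- The summand `1 / M^s` of the Schur multiple zeta series. -/
def term (r : ℕ) (lam : ℕ → ℕ) (s : ℕ × ℕ → ℂ) (m : ℕ × ℕ → ℕ) : ℂ :=
  ∏ i ∈ Finset.range r, ∏ j ∈ Finset.range (lam i), (m (i, j) : ℂ) ^ (-(s (i, j)))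

/-- The Schur multiple zeta function `ζ_λ(s)`. -/
def schurZeta (r : ℕ) (lam : ℕ → ℕ) (s : ℕ × ℕ → ℂ) : ℂ :=
  ∑' M : {m : ℕ × ℕ → ℕ // IsSSYT lam m}, term r lam s M.1

/-- The region `W_λ` of (sufficient) absolute convergence. -/
def MemW (lam : ℕ → ℕ) (s : ℕ × ℕ → ℂ) : Prop :=
  (∀ p, InDiag lam p → 1 ≤ (s p).re) ∧ ∀ p, IsCorner lam p → 1 < (s p).re

/-- Euler–Zagier multiple zeta function. -/
def mzv {n : ℕ} (s : Fin n → ℂ) : ℂ :=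
  ∑' f : {f : Fin n → ℕ // StrictMono f ∧ ∀ i, 0 < f i},
    ∏ i, (f.1 i : ℂ) ^ (-(s i))

/-- Euler–Zagier multiple zeta-star function. -/
def mzvStar {n : ℕ} (s : Fin n → ℂ) : ℂ :=
  ∑' f : {f : Fin n → ℕ // Monotone f ∧ ∀ i, 0 < f i},
    ∏ i, (f.1 i : ℂ) ^ (-(s i))

/-- `ζ⋆(a start, a (start+1), …)` with `len` terms; `1` if `len = 0`, `0` if `len < 0`. -/
def mzvStarSeq (a : ℤ → ℂ) (start len : ℤ) : ℂ :=
  if len < 0 then 0 else mzvStar fun i : Fin len.toNat => a (start + (i : ℕ))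

/-- `ζ(a start, a (start-1), …)` with `len` terms; `1` if `len = 0`, `0` if `len < 0`. -/
def mzvSeqDesc (a : ℤ → ℂ) (start len : ℤ) : ℂ :=
  if len < 0 then 0 else mzv fun i : Fin len.toNat => a (start - (i : ℕ))

/-- The conjugate partition: `conjPart r lam c` is the number of rows `i < r` with a box
in column `c`, i.e. the (0-indexed) `c`-th part of `λ'`. -/
def conjPart (r : ℕ) (lam : ℕ → ℕ) (c : ℕ) : ℕ :=
  ((Finset.range r).filter fun i => c < lam i).card

end SMZ
namespace SMZ

open Finset

variable {R : Type*} [CommRing R]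

/-! ### Truncated star sums and the row recursion -/

/-- The star sum over `1 ≤ m_1 ≤ … ≤ m_l ≤ N` of `x m_1 start * x m_2 (start + 1) * ⋯`, as a
function of `N` and of the length `l`, defined by the recursion that splits according to whether
the largest variable equals `N`; see `truncStar_eq_sum` for the sum itself. -/
def truncStar (x : ℕ → ℤ → R) (start : ℤ) : ℕ → ℕ → R
  | 0, 0 => 1
  | 0, _ + 1 => 0
  | _ + 1, 0 => 1
  | N + 1, l + 1 =>
    truncStar x start N (l + 1) + x (N + 1) (start + l) * truncStar x start (N + 1) l

/-- The truncated star sum with arguments of index `-j, …, e - 1`; it is `0` if the length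
`e + j` is negative. -/
def truncEntry (x : ℕ → ℤ → R) (N j : ℕ) (e : ℤ) : R :=
  if e + j < 0 then 0 else truncStar x (-j) N (e + j).toNat

theorem truncStar_zero (x : ℕ → ℤ → R) (start : ℤ) (N : ℕ) : truncStar x start N 0 = 1 := by
  cases N <;> simp [truncStar]

theorem truncEntry_succ (x : ℕ → ℤ → R) (N j : ℕ) (e : ℤ) :
    truncEntry x (N + 1) j e =
      truncEntry x N j e + x (N + 1) (e - 1) * truncEntry x (N + 1) j (e - 1) := by
  unfold truncEntry
  rcases lt_trichotomy (e + j) 0 with h | h | h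
  · rw [if_pos h, if_pos h, if_pos (by omega)]; simp
  · rw [if_neg (by omega), if_neg (by omega), if_pos (by omega), h]
    simp [truncStar_zero]
  · obtain ⟨l, hl⟩ : ∃ l : ℕ, e + j = l + 1 := ⟨(e + j - 1).toNat, by omega⟩
    rw [if_neg (by omega), if_neg (by omega), if_neg (by omega)]
    have h1 : (e + j).toNat = l + 1 := by omega
    have h2 : (e - 1 + j).toNat = l := by omega
    have h3 : e - 1 = -(j : ℤ) + l := by omega
    rw [h1, h2, h3, truncStar]

/-- The recursion `truncEntry_succ` iterated from `e = q - i` down to `e = p - i - 1`. -/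
theorem truncEntry_expand (x : ℕ → ℤ → R) (N j i p q : ℕ) (hpq : p ≤ q) :
    truncEntry x (N + 1) j ((q : ℤ) - i) =
      ∑ k ∈ Icc p q, (∏ t ∈ Ico k q, x (N + 1) ((t : ℤ) - i)) * truncEntry x N j ((k : ℤ) - i)
      + (∏ t ∈ Ico p q, x (N + 1) ((t : ℤ) - i)) * x (N + 1) ((p : ℤ) - i - 1) *
        truncEntry x (N + 1) j ((p : ℤ) - i - 1) := by
  induction q, hpq using Nat.le_induction with
  | base => rw [truncEntry_succ]; simp
  | succ q hq ih =>
    rw [truncEntry_succ]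
    have h1 : ((q + 1 : ℕ) : ℤ) - i - 1 = (q : ℤ) - i := by push_cast; ring
    rw [h1, ih, ← Finset.insert_Icc_right_eq_Icc_add_one (by omega : p ≤ q + 1),
      Finset.sum_insert (by simp), Finset.prod_Ico_succ_top hq]
    have h2 : ∑ k ∈ Icc p q, (∏ t ∈ Ico k (q + 1), x (N + 1) ((t : ℤ) - i)) *
        truncEntry x N j ((k : ℤ) - i) = x (N + 1) ((q : ℤ) - i) *
        ∑ k ∈ Icc p q, (∏ t ∈ Ico k q, x (N + 1) ((t : ℤ) - i)) *
          truncEntry x N j ((k : ℤ) - i) := by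
      rw [Finset.mul_sum]
      refine Finset.sum_congr rfl fun k hk => ?_
      rw [Finset.prod_Ico_succ_top (Finset.mem_Icc.1 hk).2]; ring
    rw [h2]; simp; ring

/-- A shape with `r` rows as a function on `ℕ`, extended by zero. -/
def extendShape {r : ℕ} (mu : Fin r → ℕ) (i : ℕ) : ℕ := if h : i < r then mu ⟨i, h⟩ else 0

@[simp] theorem extendShape_val {r : ℕ} (mu : Fin r → ℕ) (i : Fin r) :
    extendShape mu (i : ℕ) = mu i := by simp [extendShape]

/-- The shapes `μ` with at most `r` rows such that `λ/μ` is a horizontal strip, that is,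
`λ_{i+1} ≤ μ_i ≤ λ_i`. -/
def strips (r : ℕ) (lam : ℕ → ℕ) : Finset (Fin r → ℕ) :=
  Fintype.piFinset fun i : Fin r => Icc (lam (i + 1)) (lam i)

/-- The weight of the skew shape `λ/μ` when all its boxes are filled with `N`. -/
def stripWeight (x : ℕ → ℤ → R) (r : ℕ) (lam : ℕ → ℕ) (N : ℕ) (mu : Fin r → ℕ) : R :=
  ∏ i : Fin r, ∏ t ∈ Ico (mu i) (lam i), x N ((t : ℤ) - (i : ℕ))

/-- The truncated Jacobi–Trudi matrix of `H`-type. -/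
def jtMatrix (x : ℕ → ℤ → R) (r : ℕ) (lam : ℕ → ℕ) (N : ℕ) : Matrix (Fin r) (Fin r) R :=
  Matrix.of fun i j => truncEntry x N j ((lam i : ℤ) - (i : ℕ))

/-- Branching rule for the determinant: clearing the multiple of the next row from each row
(multiplication by the unitriangular matrix `1 - U`) leaves rows that are sums over
`λ_{i+1} ≤ μ_i ≤ λ_i`, and the determinant is expanded multilinearly. -/
theorem det_jtMatrix_succ (x : ℕ → ℤ → R) (r : ℕ) (lam : ℕ → ℕ) (hanti : Antitone lam)
    (hzero : ∀ i, r ≤ i → lam i = 0) (N : ℕ) :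
    (jtMatrix x r lam (N + 1)).det =
      ∑ mu ∈ strips r lam, stripWeight x r lam (N + 1) mu *
        (jtMatrix x r (extendShape mu) N).det := by
  set c : Fin r → R := fun i => (∏ t ∈ Ico (lam (i + 1)) (lam i), x (N + 1) ((t : ℤ) - (i : ℕ))) *
    x (N + 1) ((lam (i + 1) : ℤ) - (i : ℕ) - 1) with hc
  set U : Matrix (Fin r) (Fin r) R :=
    Matrix.of fun i k => if (k : ℕ) = i + 1 then c i else 0 with hU
  set B : Matrix (Fin r) (Fin r) R := Matrix.of fun i => ∑ k ∈ Icc (lam (i + 1)) (lam i),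
    (∏ t ∈ Ico k (lam i), x (N + 1) ((t : ℤ) - (i : ℕ))) •
      fun j : Fin r => truncEntry x N j ((k : ℤ) - (i : ℕ)) with hB
  have hdetU : (1 - U).det = 1 := by
    rw [Matrix.det_of_isUpperTriangular]
    · refine Finset.prod_eq_one fun i _ => ?_
      simp [hU]
    · intro i k hik
      have hki : k < i := hik
      have h1 : (k : ℕ) ≠ i + 1 := by have := Fin.lt_def.1 hki; omega
      simp [hU, hki.ne', h1]
  have hmul : (1 - U) * jtMatrix x r lam (N + 1) = B := by
    rw [sub_mul, one_mul, sub_eq_iff_eq_add]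
    ext i j
    have hexp := truncEntry_expand x N j i (lam (i + 1)) (lam i) (hanti (Nat.le_succ _))
    have hUA : (U * jtMatrix x r lam (N + 1)) i j =
        c i * truncEntry x (N + 1) j ((lam (i + 1) : ℤ) - (i : ℕ) - 1) := by
      rw [Matrix.mul_apply]
      by_cases hi : (i : ℕ) + 1 < r
      · rw [Finset.sum_eq_single (⟨i + 1, hi⟩ : Fin r)]
        · simp [hU, jtMatrix, sub_sub]
        · intro k _ hk
          have : (k : ℕ) ≠ i + 1 := fun h => hk (Fin.ext h)
          simp [hU, this]
        · simp
      · -- In the last row the subtracted entry has negative length, so it vanishes.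
        have h0 : truncEntry x (N + 1) j ((lam (i + 1) : ℤ) - (i : ℕ) - 1) = 0 := by
          rw [hzero _ (by omega), truncEntry, if_pos]
          have := j.2; push_cast; omega
        rw [h0, mul_zero]
        refine Finset.sum_eq_zero fun k _ => ?_
        have : (k : ℕ) ≠ i + 1 := by have := k.2; omega
        simp [hU, this]
    rw [Matrix.add_apply, hUA]
    simp only [jtMatrix, Matrix.of_apply, hB, hc, Finset.sum_apply, Pi.smul_apply, smul_eq_mul]
    exact hexp
  have hdet : (jtMatrix x r lam (N + 1)).det = B.det := by
    rw [← hmul, Matrix.det_mul, hdetU, one_mul]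
  rw [hdet]
  have := (Matrix.detRowAlternating (R := R) (n := Fin r)).toMultilinearMap.map_sum_finset
    (fun (i : Fin r) (k : ℕ) => (∏ t ∈ Ico k (lam i), x (N + 1) ((t : ℤ) - (i : ℕ))) •
      fun j : Fin r => truncEntry x N j ((k : ℤ) - (i : ℕ)))
    (fun i : Fin r => Icc (lam (i + 1)) (lam i))
  refine (this.trans ?_)
  refine Finset.sum_congr rfl fun mu _ => ?_
  rw [MultilinearMap.map_smul_univ, smul_eq_mul]
  simp only [stripWeight, jtMatrix, extendShape_val]
  rfl

/-! ### Tableaux with bounded entries -/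

theorem finite_ssyt (r : ℕ) (lam : ℕ → ℕ) (hanti : Antitone lam)
    (hzero : ∀ i, r ≤ i → lam i = 0) (N : ℕ) :
    {m : ℕ × ℕ → ℕ | IsSSYT lam m ∧ ∀ p, m p ≤ N}.Finite := by
  rw [← Set.finite_coe_iff]
  refine Finite.of_injective
    (fun (m : {m : ℕ × ℕ → ℕ | IsSSYT lam m ∧ ∀ p, m p ≤ N}) (p : Fin r × Fin (lam 0)) =>
      (⟨m.1 (p.1, p.2), Nat.lt_succ_of_le (m.2.2 _)⟩ : Fin (N + 1))) ?_
  intro m m' h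
  ext ⟨i, j⟩
  by_cases hij : InDiag lam (i, j)
  · have hj : j < lam i := hij
    have hi : i < r := by
      by_contra hi; rw [hzero i (by omega)] at hj; omega
    have := congrFun h (⟨i, hi⟩, ⟨j, hj.trans_le (hanti (Nat.zero_le i))⟩)
    simpa using this
  · rw [m.2.1.zero_off _ hij, m'.2.1.zero_off _ hij]

open Classical in
/-- The semi-standard tableaux of shape `λ` with entries at most `N`. The set is finite whenever
`λ` is a partition; otherwise the value may be the default `∅`. -/
def boundedSSYT (lam : ℕ → ℕ) (N : ℕ) : Finset (ℕ × ℕ → ℕ) :=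
  if h : {m : ℕ × ℕ → ℕ | IsSSYT lam m ∧ ∀ p, m p ≤ N}.Finite then h.toFinset else ∅

theorem mem_boundedSSYT {r : ℕ} {lam : ℕ → ℕ} (hanti : Antitone lam)
    (hzero : ∀ i, r ≤ i → lam i = 0) {N : ℕ} {m : ℕ × ℕ → ℕ} :
    m ∈ boundedSSYT lam N ↔ IsSSYT lam m ∧ ∀ p, m p ≤ N := by
  rw [boundedSSYT, dif_pos (finite_ssyt r lam hanti hzero N)]; simp

/-- The weight of a filling: the product of `x (entry) (content)` over the boxes. -/
def weight (x : ℕ → ℤ → R) (r : ℕ) (lam : ℕ → ℕ) (m : ℕ × ℕ → ℕ) : R :=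
  ∏ i ∈ range r, ∏ j ∈ range (lam i), x (m (i, j)) ((j : ℤ) - i)

/-- The Schur sum over tableaux with entries at most `N`. -/
def truncSchur (x : ℕ → ℤ → R) (r : ℕ) (lam : ℕ → ℕ) (N : ℕ) : R :=
  ∑ m ∈ boundedSSYT lam N, weight x r lam m

theorem IsSSYT.row_mono {lam : ℕ → ℕ} {m : ℕ × ℕ → ℕ} (hm : IsSSYT lam m) {i j k : ℕ}
    (hjk : j ≤ k) (hk : k < lam i) : m (i, j) ≤ m (i, k) := by
  induction k, hjk using Nat.le_induction with
  | base => exact le_rfl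
  | succ k hjk ih => exact (ih (by omega)).trans (hm.row_le i k hk)

/-- The shape formed by the boxes of the tableau `m` with entry at most `N`: row `i` ends at the
first column outside the diagram or with an entry larger than `N`. -/
def subShape (lam : ℕ → ℕ) (N : ℕ) (m : ℕ × ℕ → ℕ) (i : ℕ) : ℕ :=
  sInf {k | lam i ≤ k ∨ N < m (i, k)}

theorem lt_subShape_iff {lam : ℕ → ℕ} {m : ℕ × ℕ → ℕ} (hm : IsSSYT lam m) (N i j : ℕ) :
    j < subShape lam N m i ↔ j < lam i ∧ m (i, j) ≤ N := by
  have hne : {k | lam i ≤ k ∨ N < m (i, k)}.Nonempty := ⟨lam i, Or.inl le_rfl⟩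
  constructor
  · intro h
    have := Nat.notMem_of_lt_sInf h
    simpa using this
  · rintro ⟨h1, h2⟩
    by_contra h
    rcases Nat.sInf_mem hne with h3 | h3
    · exact absurd (h3.trans (not_lt.1 h)) (by omega)
    · have := hm.row_mono (not_lt.1 h) h1
      change N < m (i, subShape lam N m i) at h3
      omega

theorem strips_spec {r : ℕ} {lam : ℕ → ℕ} (hzero : ∀ i, r ≤ i → lam i = 0) {mu : Fin r → ℕ}
    (hmu : mu ∈ strips r lam) :
    (∀ i, lam (i + 1) ≤ extendShape mu i) ∧ (∀ i, extendShape mu i ≤ lam i) ∧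
      Antitone (extendShape mu) ∧ ∀ i, r ≤ i → extendShape mu i = 0 := by
  have h1 : ∀ i, lam (i + 1) ≤ extendShape mu i ∧ extendShape mu i ≤ lam i := by
    intro i
    by_cases hi : i < r
    · have := Fintype.mem_piFinset.1 hmu ⟨i, hi⟩
      simpa [extendShape, hi] using this
    · simp [extendShape, hi, hzero (i + 1) (by omega)]
  refine ⟨fun i => (h1 i).1, fun i => (h1 i).2,
    antitone_nat_of_succ_le fun i => (h1 (i + 1)).2.trans (h1 i).1, fun i hi => ?_⟩
  simp [extendShape, not_lt.2 hi]

/-- Branching rule for the Schur sum: a tableau with entries `≤ N + 1` corresponds to the pair of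
the shape `μ` of its entries `≤ N` and its restriction to `μ`, and `λ/μ` is a horizontal strip. -/
theorem truncSchur_succ (x : ℕ → ℤ → R) (r : ℕ) (lam : ℕ → ℕ) (hanti : Antitone lam)
    (hzero : ∀ i, r ≤ i → lam i = 0) (N : ℕ) :
    truncSchur x r lam (N + 1) =
      ∑ mu ∈ strips r lam, stripWeight x r lam (N + 1) mu * truncSchur x r (extendShape mu) N := by
  classical
  simp only [truncSchur, Finset.mul_sum]
  rw [Finset.sum_sigma']
  symm
  refine Finset.sum_bij'
    (fun q _ => fun p : ℕ × ℕ =>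
      if p.2 < extendShape q.1 p.1 then q.2 p else if p.2 < lam p.1 then N + 1 else 0)
    (fun m _ => ⟨fun i : Fin r => subShape lam N m i, fun p => if m p ≤ N then m p else 0⟩)
    ?_ ?_ ?_ ?_ ?_
  · rintro ⟨mu, m⟩ hq
    obtain ⟨hmu, hm⟩ : mu ∈ strips r lam ∧ m ∈ boundedSSYT (extendShape mu) N :=
      Finset.mem_sigma.1 hq
    obtain ⟨hlo, hhi, hant, hz⟩ := strips_spec hzero hmu
    obtain ⟨hS, hb⟩ := (mem_boundedSSYT hant hz).1 hm
    rw [mem_boundedSSYT hanti hzero]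
    refine ⟨⟨?_, ?_, ?_, ?_⟩, ?_⟩
    · rintro ⟨i, j⟩ hp
      have h1 : ¬ j < lam i := hp
      have h2 := hhi i
      simp only
      rw [if_neg (by omega), if_neg h1]
    · rintro ⟨i, j⟩ hp
      have h1 : j < lam i := hp
      simp only
      split_ifs with h
      · exact hS.pos _ h
      · omega
    · intro i j hp
      have h1 : j + 1 < lam i := hp
      simp only
      split_ifs with h2 h3 h3
      · exact hS.row_le i j h3
      · exact (hb _).trans (by omega)
      all_goals omega
    · intro i j hp
      have h1 : j < lam (i + 1) := hp
      have h2 := hlo i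
      simp only
      rw [if_pos (by omega)]
      split_ifs with h3
      · exact hS.col_lt i j h3
      · exact Nat.lt_succ_of_le (hb _)
    · intro p
      simp only
      split_ifs
      · exact (hb _).trans (by omega)
      · exact le_rfl
      · omega
  · intro m hm
    obtain ⟨hS, hb⟩ := (mem_boundedSSYT hanti hzero).1 hm
    have hmu : (fun i : Fin r => subShape lam N m i) ∈ strips r lam := by
      refine Fintype.mem_piFinset.2 fun i => Finset.mem_Icc.2 ⟨?_, ?_⟩
      · by_contra h
        push Not at h
        have h1 : m (i, subShape lam N m i) < m (i + 1, subShape lam N m i) := hS.col_lt i _ h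
        have h2 := hb (i + 1, subShape lam N m i)
        refine lt_irrefl (subShape lam N m i) ((lt_subShape_iff hS N i _).2 ⟨?_, by omega⟩)
        exact h.trans_le (hanti (Nat.le_succ _))
      · by_contra h
        push Not at h
        exact lt_irrefl _ ((lt_subShape_iff hS N i _).1 h).1
    obtain ⟨hlo, hhi, hant, hz⟩ := strips_spec hzero hmu
    have hin : ∀ i j, j < extendShape (fun i : Fin r => subShape lam N m i) i ↔
        j < lam i ∧ m (i, j) ≤ N := by
      intro i j
      by_cases hi : i < r
      · simp only [extendShape, hi, dif_pos]; exact lt_subShape_iff hS N i j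
      · simp [extendShape, hi, hzero i (by omega)]
    refine Finset.mem_sigma.2 ⟨hmu, (mem_boundedSSYT hant hz).2 ⟨⟨?_, ?_, ?_, ?_⟩, ?_⟩⟩
    · rintro ⟨i, j⟩ hp
      have h1 := mt (hin i j).2 hp
      simp only
      split_ifs with h
      · exact hS.zero_off _ fun h' => h1 ⟨h', h⟩
      · rfl
    · rintro ⟨i, j⟩ hp
      obtain ⟨h1, h2⟩ := (hin i j).1 hp
      simp only
      rw [if_pos h2]
      exact hS.pos _ h1
    · intro i j hp
      obtain ⟨h1, h2⟩ := (hin i (j + 1)).1 hp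
      have h3 := hS.row_le i j h1
      simp only
      rw [if_pos h2, if_pos (by omega)]
      exact h3
    · intro i j hp
      obtain ⟨h1, h2⟩ := (hin (i + 1) j).1 hp
      have h3 := hS.col_lt i j h1
      simp only
      rw [if_pos h2, if_pos (by omega)]
      exact h3
    · intro p
      simp only
      split_ifs with h
      · exact h
      · omega
  · rintro ⟨mu, m⟩ hq
    obtain ⟨hmu, hm⟩ : mu ∈ strips r lam ∧ m ∈ boundedSSYT (extendShape mu) N :=
      Finset.mem_sigma.1 hq
    obtain ⟨hlo, hhi, hant, hz⟩ := strips_spec hzero hmu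
    obtain ⟨hS, hb⟩ := (mem_boundedSSYT hant hz).1 hm
    refine Sigma.ext ?_ (heq_of_eq ?_)
    · funext i
      have key : ∀ k, (lam i ≤ k ∨ N < (if k < extendShape mu i then m ((i : ℕ), k)
          else if k < lam i then N + 1 else 0)) ↔ mu i ≤ k := by
        intro k
        have h1 := hhi i
        have h2 := hb (i, k)
        rw [extendShape_val] at h1 ⊢
        split_ifs <;> omega
      simp only [subShape]
      simp only [key]
      exact csInf_Ici
    · funext p
      have h2 := hb p
      simp only
      by_cases h : p.2 < extendShape mu p.1
      · rw [if_pos h, if_pos h2]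
      · have h0 := hS.zero_off p h
        simp only [h, if_false]
        rw [h0]
        split_ifs <;> omega
  · intro m hm
    obtain ⟨hS, hb⟩ := (mem_boundedSSYT hanti hzero).1 hm
    funext ⟨i, j⟩
    have hin : j < extendShape (fun i : Fin r => subShape lam N m i) i ↔
        j < lam i ∧ m (i, j) ≤ N := by
      by_cases hi : i < r
      · simp only [extendShape, hi, dif_pos]; exact lt_subShape_iff hS N i j
      · simp [extendShape, hi, hzero i (by omega)]
    have h2 := hb (i, j)
    have h3 : ¬ j < lam i → m (i, j) = 0 := hS.zero_off (i, j)
    simp only [hin]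
    split_ifs <;> omega
  · rintro ⟨mu, m⟩ hq
    obtain ⟨hmu, hm⟩ : mu ∈ strips r lam ∧ m ∈ boundedSSYT (extendShape mu) N :=
      Finset.mem_sigma.1 hq
    obtain ⟨hlo, hhi, hant, hz⟩ := strips_spec hzero hmu
    simp only [stripWeight, weight]
    rw [Finset.prod_range, Finset.prod_range, ← Finset.prod_mul_distrib]
    refine Finset.prod_congr rfl fun i _ => ?_
    have h1 := hhi i
    rw [extendShape_val] at h1
    rw [mul_comm, ← Finset.prod_range_mul_prod_Ico _ h1]
    simp only [extendShape_val]
    congr 1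
    · refine Finset.prod_congr rfl fun j hj => ?_
      rw [if_pos (Finset.mem_range.1 hj)]
    · refine Finset.prod_congr rfl fun j hj => ?_
      obtain ⟨h2, h3⟩ := Finset.mem_Ico.1 hj
      rw [if_neg (by omega), if_pos h3]

/-- For `N = 0` both sides are `1` for the empty shape and `0` otherwise; the matrix is lower
triangular because its entries above the diagonal are star sums of positive length. -/
theorem truncSchur_zero (x : ℕ → ℤ → R) (r : ℕ) (lam : ℕ → ℕ) (hanti : Antitone lam)
    (hzero : ∀ i, r ≤ i → lam i = 0) :
    truncSchur x r lam 0 = (jtMatrix x r lam 0).det := by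
  have hdet : (jtMatrix x r lam 0).det = ∏ i : Fin r, if lam i = 0 then (1 : R) else 0 := by
    rw [Matrix.det_of_isLowerTriangular]
    · refine Finset.prod_congr rfl fun i _ => ?_
      simp only [jtMatrix, Matrix.of_apply, truncEntry]
      rw [if_neg (by omega)]
      have : ((lam i : ℤ) - (i : ℕ) + (i : ℕ)).toNat = lam i := by omega
      rw [this]
      cases lam i <;> simp [truncStar]
    · intro i j hij
      have hij' : (i : ℕ) < j := hij
      simp only [jtMatrix, Matrix.of_apply, truncEntry]
      rw [if_neg (by omega)]
      obtain ⟨l, hl⟩ : ∃ l, ((lam i : ℤ) - (i : ℕ) + (j : ℕ)).toNat = l + 1 :=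
        ⟨((lam i : ℤ) - (i : ℕ) + (j : ℕ)).toNat - 1, by omega⟩
      rw [hl, truncStar]
  rw [hdet, truncSchur]
  by_cases h : ∀ i, lam i = 0
  · have hT : boundedSSYT lam 0 = {fun _ => 0} := by
      ext m
      rw [mem_boundedSSYT hanti hzero, Finset.mem_singleton]
      constructor
      · rintro ⟨_, hb⟩; funext p; simpa using hb p
      · rintro rfl
        refine ⟨⟨fun _ _ => rfl, ?_, ?_, ?_⟩, fun _ => le_rfl⟩ <;> simp [InDiag, h]
    simp [hT, weight, h]
  · push Not at h
    obtain ⟨i, hi⟩ := h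
    have hir : i < r := by by_contra h; exact hi (hzero i (by omega))
    have hT : boundedSSYT lam 0 = ∅ := by
      rw [Finset.eq_empty_iff_forall_notMem]
      intro m hm
      obtain ⟨hS, hb⟩ := (mem_boundedSSYT hanti hzero).1 hm
      have h1 := hS.pos (i, 0) (Nat.pos_of_ne_zero hi)
      have := hb (i, 0)
      omega
    rw [hT, Finset.sum_empty]
    symm
    exact Finset.prod_eq_zero (Finset.mem_univ (⟨i, hir⟩ : Fin r)) (by simp [hi])

/-- The truncated Jacobi–Trudi formula. -/
theorem truncSchur_eq_det (x : ℕ → ℤ → R) (r N : ℕ) : ∀ lam : ℕ → ℕ, Antitone lam →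
    (∀ i, r ≤ i → lam i = 0) → truncSchur x r lam N = (jtMatrix x r lam N).det := by
  induction N with
  | zero => exact fun lam h h' => truncSchur_zero x r lam h h'
  | succ N ih =>
    intro lam hanti hzero
    rw [truncSchur_succ x r lam hanti hzero, det_jtMatrix_succ x r lam hanti hzero]
    refine Finset.sum_congr rfl fun mu hmu => ?_
    obtain ⟨-, -, h1, h2⟩ := strips_spec hzero hmu
    rw [ih _ h1 h2]

/-! ### Star sums as sums over monotone sequences -/

open Filter Topology

/-- The weakly increasing sequences of length `n` with values in `{1, …, N}`. -/
def monoBounded (n N : ℕ) : Finset (Fin n → ℕ) :=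
  (Fintype.piFinset fun _ : Fin n => Icc 1 N).filter Monotone

theorem mem_monoBounded {n N : ℕ} {f : Fin n → ℕ} :
    f ∈ monoBounded n N ↔ (∀ i, 1 ≤ f i ∧ f i ≤ N) ∧ Monotone f := by
  simp [monoBounded]

theorem truncStar_eq_sum (x : ℕ → ℤ → R) (start : ℤ) (N n : ℕ) :
    truncStar x start N n = ∑ f ∈ monoBounded n N, ∏ i, x (f i) (start + (i : ℕ)) := by
  have hnil : ∀ N, monoBounded 0 N = {Fin.elim0} := by
    intro N
    ext f
    rw [mem_monoBounded, Finset.mem_singleton]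
    exact ⟨fun _ => Subsingleton.elim _ _, fun _ => ⟨fun i => i.elim0, fun i => i.elim0⟩⟩
  induction N generalizing n with
  | zero =>
    cases n with
    | zero => simp [truncStar, hnil]
    | succ n =>
      have : monoBounded (n + 1) 0 = ∅ := by
        rw [Finset.eq_empty_iff_forall_notMem]
        intro f hf
        have := (mem_monoBounded.1 hf).1 0
        omega
      simp [truncStar, this]
  | succ N ihN =>
    induction n with
    | zero => simp [truncStar, hnil]
    | succ n ihn =>
      rw [truncStar, ihN, ihn,
        ← Finset.sum_filter_add_sum_filter_not (monoBounded (n + 1) (N + 1))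
          (fun f => f (Fin.last n) ≤ N)]
      congr 1
      · refine Finset.sum_congr ?_ fun _ _ => rfl
        ext f
        simp only [Finset.mem_filter, mem_monoBounded]
        constructor
        · rintro ⟨h1, h2⟩
          exact ⟨⟨fun i => ⟨(h1 i).1, by have := (h1 i).2; omega⟩, h2⟩, (h1 _).2⟩
        · rintro ⟨⟨h1, h2⟩, h3⟩
          exact ⟨fun i => ⟨(h1 i).1, (h2 (Fin.le_last i)).trans h3⟩, h2⟩
      · rw [Finset.mul_sum]
        refine Finset.sum_bij' (fun f _ => (Fin.snoc f (N + 1) : Fin (n + 1) → ℕ))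
          (fun f _ i => f i.castSucc) ?_ ?_ ?_ ?_ ?_
        · intro f hf
          obtain ⟨h1, h2⟩ := mem_monoBounded.1 hf
          simp only [Finset.mem_filter, mem_monoBounded]
          refine ⟨⟨fun i => ?_, ?_⟩, by simp⟩
          · refine Fin.lastCases ?_ (fun i => ?_) i
            · simp
            · simpa using h1 i
          · intro i k
            refine Fin.lastCases ?_ (fun k => ?_) k
            · refine Fin.lastCases ?_ (fun i => ?_) i
              · simp
              · intro _; simpa using (h1 i).2
            · refine Fin.lastCases ?_ (fun i => ?_) i
              · intro h; exact absurd h (not_le.2 (Fin.castSucc_lt_last k))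
              · intro h; simpa using h2 (Fin.castSucc_le_castSucc_iff.1 h)
        · intro f hf
          simp only [Finset.mem_filter, mem_monoBounded] at hf
          obtain ⟨⟨h1, h2⟩, _⟩ := hf
          exact mem_monoBounded.2 ⟨fun i => h1 i.castSucc,
            fun i k h => h2 (Fin.castSucc_le_castSucc_iff.2 h)⟩
        · intro f _
          simp
        · intro f hf
          simp only [Finset.mem_filter, mem_monoBounded] at hf
          obtain ⟨⟨h1, h2⟩, h3⟩ := hf
          have : f (Fin.last n) = N + 1 := by have := (h1 (Fin.last n)).2; omega
          simp only [← this]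
          exact Fin.snoc_init_self f
        · intro f _
          rw [Fin.prod_univ_castSucc]
          simp [mul_comm]

/-! ### Absolute convergence and passage to the limit -/

theorem summable_pi_prod {ι : Type*} [Fintype ι] [DecidableEq ι] (g : ℕ → ℝ) (h0 : ∀ n, 0 ≤ g n)
    (hg : Summable g) : Summable fun f : ι → ℕ => ∏ i, g (f i) := by
  refine summable_of_sum_le (c := ∏ _i : ι, ∑' n, g n)
    (fun f => Finset.prod_nonneg fun i _ => h0 _) fun u => ?_
  calc ∑ f ∈ u, ∏ i, g (f i)
      ≤ ∑ f ∈ Fintype.piFinset fun i => u.image fun f => f i, ∏ i, g (f i) := by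
        refine Finset.sum_le_sum_of_subset_of_nonneg ?_
          fun f _ _ => Finset.prod_nonneg fun i _ => h0 _
        intro f hf
        exact Fintype.mem_piFinset.2 fun i => Finset.mem_image_of_mem _ hf
    _ = ∏ i, ∑ n ∈ u.image fun f => f i, g n := (Finset.prod_univ_sum _ _).symm
    _ ≤ ∏ _i : ι, ∑' n, g n :=
        Finset.prod_le_prod (fun i _ => Finset.sum_nonneg fun n _ => h0 n)
          fun i _ => hg.sum_le_tsum _ fun n _ => h0 n

/-- In a row with largest entry `f (n - 1)`, the excess `n * δ` of the last exponent over `1` can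
be distributed evenly, because `f (n - 1) ^ (-δ) ≤ f j ^ (-δ)`. -/
theorem row_bound (σ : ℕ → ℝ) (f : ℕ → ℕ) (n : ℕ) (δ : ℝ) (hδ : 0 ≤ δ)
    (hσ : ∀ j < n, 1 ≤ σ j) (hlast : 0 < n → 1 + n * δ ≤ σ (n - 1)) (hpos : ∀ j < n, 0 < f j)
    (hmono : ∀ j < n, f j ≤ f (n - 1)) :
    ∏ j ∈ range n, (f j : ℝ) ^ (-σ j) ≤ ∏ j ∈ range n, (f j : ℝ) ^ (-(1 + δ)) := by
  cases n with
  | zero => simp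
  | succ k =>
    simp only [Nat.add_sub_cancel] at hlast hmono
    have hk : (1 : ℝ) ≤ f k := by exact_mod_cast hpos k (by omega)
    have hk0 : (0 : ℝ) < f k := by linarith
    have h1 : (f k : ℝ) ^ (-σ k) ≤ (∏ _j ∈ range k, (f k : ℝ) ^ (-δ)) * (f k : ℝ) ^ (-(1 + δ)) := by
      rw [Finset.prod_const, Finset.card_range, ← Real.rpow_natCast, ← Real.rpow_mul hk0.le,
        ← Real.rpow_add hk0]
      refine Real.rpow_le_rpow_of_exponent_le hk ?_
      have := hlast (by omega)
      push_cast at this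
      linarith
    rw [Finset.prod_range_succ, Finset.prod_range_succ]
    calc (∏ j ∈ range k, (f j : ℝ) ^ (-σ j)) * (f k : ℝ) ^ (-σ k)
        ≤ (∏ j ∈ range k, (f j : ℝ) ^ (-σ j)) *
          ((∏ _j ∈ range k, (f k : ℝ) ^ (-δ)) * (f k : ℝ) ^ (-(1 + δ))) := by
          gcongr
      _ = (∏ j ∈ range k, (f j : ℝ) ^ (-σ j) * (f k : ℝ) ^ (-δ)) * (f k : ℝ) ^ (-(1 + δ)) := by
          rw [Finset.prod_mul_distrib, mul_assoc]
      _ ≤ (∏ j ∈ range k, (f j : ℝ) ^ (-(1 + δ))) * (f k : ℝ) ^ (-(1 + δ)) := by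
          refine mul_le_mul_of_nonneg_right ?_ (Real.rpow_nonneg hk0.le _)
          refine Finset.prod_le_prod (fun j _ => by positivity) fun j hj => ?_
          have hjk := Finset.mem_range.1 hj
          have hj1 : (1 : ℝ) ≤ f j := by exact_mod_cast hpos j (by omega)
          have hj0 : (0 : ℝ) < f j := by linarith
          have hle : (f j : ℝ) ≤ f k := by exact_mod_cast hmono j (by omega)
          rw [neg_add, Real.rpow_add hj0]
          refine mul_le_mul ?_ ?_ (by positivity) (by positivity)
          · exact Real.rpow_le_rpow_of_exponent_le hj1 (by linarith [hσ j (by omega)])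
          · exact Real.rpow_le_rpow_of_nonpos hj0 hle (by linarith)

theorem summable_rpow_bound {δ : ℝ} (hδ : 0 < δ) :
    Summable fun n : ℕ => (n : ℝ) ^ (-(1 + δ)) :=
  Real.summable_nat_rpow.2 (by linarith)

theorem summable_star (a : ℤ → ℂ) (start : ℤ) (n : ℕ)
    (h1 : ∀ j : ℕ, j < n → 1 ≤ (a (start + j)).re)
    (h2 : 0 < n → 1 < (a (start + ((n - 1 : ℕ) : ℤ))).re) :
    Summable fun f : {f : Fin n → ℕ // Monotone f ∧ ∀ i, 0 < f i} =>
      ∏ i, (f.1 i : ℂ) ^ (-(a (start + (i : ℕ)))) := by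
  obtain ⟨δ, hδ, hδn⟩ : ∃ δ : ℝ, 0 < δ ∧
      (0 < n → 1 + n * δ ≤ (a (start + ((n - 1 : ℕ) : ℤ))).re) := by
    rcases Nat.eq_zero_or_pos n with rfl | hn
    · exact ⟨1, one_pos, fun h => absurd h (lt_irrefl _)⟩
    · have hn' : (0 : ℝ) < n := by exact_mod_cast hn
      refine ⟨((a (start + ((n - 1 : ℕ) : ℤ))).re - 1) / n,
        div_pos (by linarith [h2 hn]) hn', fun _ => ?_⟩
      rw [mul_div_cancel₀ _ hn'.ne']; linarith
  have hs := (summable_pi_prod (ι := Fin n) _ (fun n => Real.rpow_nonneg (Nat.cast_nonneg n) _)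
    (summable_rpow_bound hδ)).comp_injective
      (Subtype.val_injective (p := fun f : Fin n → ℕ => Monotone f ∧ ∀ i, 0 < f i))
  refine Summable.of_norm_bounded hs fun f => ?_
  obtain ⟨f, hf, hpos⟩ := f
  rw [norm_prod]
  simp only [Function.comp]
  have key := row_bound (fun j => (a (start + j)).re) (fun j => if h : j < n then f ⟨j, h⟩ else 0)
    n δ hδ.le h1 hδn (fun j hj => by simp only [hj, dif_pos]; exact hpos _)
    (fun j hj => by
      have : n - 1 < n := by omega
      simp only [hj, this, dif_pos]
      exact hf (Fin.le_def.2 (by simp only; omega)))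
  rw [Finset.prod_range, Finset.prod_range] at key
  simp only [Fin.is_lt, dif_pos, Fin.eta] at key
  refine le_trans (le_of_eq ?_) key
  refine Finset.prod_congr rfl fun i _ => ?_
  rw [Complex.norm_natCast_cpow_of_pos (hpos i), Complex.neg_re]

theorem tendsto_truncStar (a : ℤ → ℂ) (start : ℤ) (n : ℕ)
    (h1 : ∀ j : ℕ, j < n → 1 ≤ (a (start + j)).re)
    (h2 : 0 < n → 1 < (a (start + ((n - 1 : ℕ) : ℤ))).re) :
    Tendsto (fun N => truncStar (fun m c => (m : ℂ) ^ (-(a c))) start N n) atTop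
      (𝓝 (mzvStar fun i : Fin n => a (start + (i : ℕ)))) := by
  classical
  have hs := (summable_star a start n h1 h2).hasSum
  have ht : Tendsto (fun N => (monoBounded n N).subtype fun f => Monotone f ∧ ∀ i, 0 < f i)
      atTop atTop := by
    refine tendsto_atTop_finset_of_monotone ?_ ?_
    · intro N N' hN f hf
      rw [Finset.mem_subtype, mem_monoBounded] at hf ⊢
      exact ⟨fun i => ⟨(hf.1 i).1, (hf.1 i).2.trans hN⟩, hf.2⟩
    · rintro ⟨f, hf, hpos⟩
      refine ⟨∑ i, f i, ?_⟩
      rw [Finset.mem_subtype, mem_monoBounded]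
      exact ⟨fun i => ⟨hpos i, Finset.single_le_sum (fun _ _ => Nat.zero_le _)
        (Finset.mem_univ i)⟩, hf⟩
  refine (hs.comp ht).congr fun N => ?_
  rw [truncStar_eq_sum]
  simp only [Function.comp]
  exact Finset.sum_subtype_of_mem (fun f : Fin n → ℕ => ∏ i, (f i : ℂ) ^ (-(a (start + (i : ℕ)))))
    fun f hf => ⟨(mem_monoBounded.1 hf).2, fun i => ((mem_monoBounded.1 hf).1 i).1⟩

theorem exists_uniform_gap (r : ℕ) (c : ℕ → ℝ) (hc : ∀ i < r, 0 < c i) :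
    ∃ δ : ℝ, 0 < δ ∧ ∀ i < r, δ ≤ c i := by
  induction r with
  | zero => exact ⟨1, one_pos, fun i hi => absurd hi (Nat.not_lt_zero i)⟩
  | succ r ih =>
    obtain ⟨δ, h0, h⟩ := ih fun i hi => hc i (by omega)
    refine ⟨min δ (c r), lt_min h0 (hc r (by omega)), fun i hi => ?_⟩
    rcases Nat.lt_succ_iff_lt_or_eq.1 hi with hi | rfl
    · exact (min_le_left _ _).trans (h i hi)
    · exact min_le_right _ _

/-- Absolute convergence of the tableau series: forgetting the column condition, it is dominated
by a product of independent sums, one for each box. -/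
theorem summable_term (r : ℕ) (lam : ℕ → ℕ) (hlam : IsPartitionWith r lam) (s : ℕ × ℕ → ℂ)
    (h1 : ∀ p, InDiag lam p → 1 ≤ (s p).re) (h2 : ∀ i < r, 1 < (s (i, lam i - 1)).re) :
    Summable fun M : {m : ℕ × ℕ → ℕ // IsSSYT lam m} => term r lam s M.1 := by
  obtain ⟨δ, hδ, hδr⟩ := exists_uniform_gap r
    (fun i => ((s (i, lam i - 1)).re - 1) / lam i) fun i hi => by
      have : (0 : ℝ) < lam i := by exact_mod_cast (hlam.2 i).2 hi
      exact div_pos (by linarith [h2 i hi]) this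
  have hinj : Function.Injective fun (M : {m : ℕ × ℕ → ℕ // IsSSYT lam m})
      (b : Σ i : Fin r, Fin (lam i)) => M.1 (b.1, b.2) := by
    rintro ⟨m, hm⟩ ⟨m', hm'⟩ h
    refine Subtype.ext (funext fun ⟨i, j⟩ => ?_)
    by_cases hij : InDiag lam (i, j)
    · have hj : j < lam i := hij
      exact congrFun h ⟨⟨i, (hlam.2 i).1 (by omega)⟩, ⟨j, hj⟩⟩
    · exact (hm.zero_off _ hij).trans (hm'.zero_off _ hij).symm
  have hs := (summable_pi_prod (ι := Σ i : Fin r, Fin (lam i)) _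
    (fun n => Real.rpow_nonneg (Nat.cast_nonneg n) _) (summable_rpow_bound hδ)).comp_injective hinj
  refine Summable.of_norm_bounded hs fun M => ?_
  obtain ⟨m, hm⟩ := M
  simp only [Function.comp, term, norm_prod]
  rw [Fintype.prod_sigma, Finset.prod_range]
  refine Finset.prod_le_prod (fun i _ => Finset.prod_nonneg fun _ _ => norm_nonneg _) fun i _ => ?_
  have hli : 0 < lam i := (hlam.2 i).2 i.2
  have hli' : (0 : ℝ) < lam i := by exact_mod_cast hli
  have key := row_bound (fun j => (s (i, j)).re) (fun j => m (i, j)) (lam i) δ hδ.le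
    (fun j hj => h1 _ hj)
    (fun _ => by
      have := hδr i i.2
      rw [le_div_iff₀ hli'] at this
      linarith)
    (fun j hj => hm.pos _ hj) (fun j hj => hm.row_mono (by omega) (by omega))
  rw [← Finset.prod_range (fun j => (m ((i : ℕ), j) : ℝ) ^ (-(1 + δ)))]
  refine le_trans (le_of_eq ?_) key
  refine Finset.prod_congr rfl fun j hj => ?_
  rw [Complex.norm_natCast_cpow_of_pos (hm.pos (i, j) (Finset.mem_range.1 hj)), Complex.neg_re]

theorem tendsto_truncSchur (r : ℕ) (lam : ℕ → ℕ) (hlam : IsPartitionWith r lam)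
    (s : ℕ × ℕ → ℂ) (a : ℤ → ℂ)
    (hdiag : ∀ p : ℕ × ℕ, InDiag lam p → s p = a ((p.2 : ℤ) - (p.1 : ℤ)))
    (h1 : ∀ p, InDiag lam p → 1 ≤ (s p).re) (h2 : ∀ i < r, 1 < (s (i, lam i - 1)).re) :
    Tendsto (fun N => truncSchur (fun m c => (m : ℂ) ^ (-(a c))) r lam N) atTop
      (𝓝 (schurZeta r lam s)) := by
  classical
  have hzero : ∀ i, r ≤ i → lam i = 0 := fun i hi => by
    have := (hlam.2 i).1; omega
  have hmem : ∀ {N m}, m ∈ boundedSSYT lam N ↔ IsSSYT lam m ∧ ∀ p, m p ≤ N :=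
    mem_boundedSSYT hlam.1 hzero
  have hs := (summable_term r lam hlam s h1 h2).hasSum
  have ht : Tendsto (fun N => (boundedSSYT lam N).subtype (IsSSYT lam)) atTop atTop := by
    refine tendsto_atTop_finset_of_monotone ?_ ?_
    · intro N N' hN m hm
      rw [Finset.mem_subtype, hmem] at hm ⊢
      exact ⟨hm.1, fun p => (hm.2 p).trans hN⟩
    · rintro ⟨m, hm⟩
      refine ⟨∑ p ∈ range r ×ˢ range (lam 0), m p, ?_⟩
      rw [Finset.mem_subtype, hmem]
      refine ⟨hm, fun p => ?_⟩
      by_cases hp : InDiag lam p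
      · have hp' : p.2 < lam p.1 := hp
        refine Finset.single_le_sum (f := m) (fun _ _ => Nat.zero_le _) (Finset.mem_product.2
          ⟨Finset.mem_range.2 ((hlam.2 _).1 (by omega)), Finset.mem_range.2 ?_⟩)
        exact hp'.trans_le (hlam.1 (Nat.zero_le _))
      · simp [hm.zero_off p hp]
  refine (hs.comp ht).congr fun N => ?_
  simp only [Function.comp, truncSchur]
  rw [Finset.sum_subtype_of_mem (fun m => term r lam s m) fun m hm => (hmem.1 hm).1]
  refine Finset.sum_congr rfl fun m _ => ?_
  refine Finset.prod_congr rfl fun i _ => Finset.prod_congr rfl fun j hj => ?_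
  rw [hdiag (i, j) (Finset.mem_range.1 hj)]

/-- The star series in the determinant converge: their arguments are indexed by contents of boxes
of `λ`, and the last one is the content of the last box of row `i`. -/
theorem tendsto_truncEntry (r : ℕ) (lam : ℕ → ℕ) (hlam : IsPartitionWith r lam)
    (s : ℕ × ℕ → ℂ) (a : ℤ → ℂ)
    (hdiag : ∀ p : ℕ × ℕ, InDiag lam p → s p = a ((p.2 : ℤ) - (p.1 : ℤ)))
    (h1 : ∀ p, InDiag lam p → 1 ≤ (s p).re) (h2 : ∀ i < r, 1 < (s (i, lam i - 1)).re)
    (i j : Fin r) :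
    Tendsto (fun N => truncEntry (fun m c => (m : ℂ) ^ (-(a c))) N j ((lam i : ℤ) - (i : ℕ)))
      atTop (𝓝 (mzvStarSeq a (-(j : ℕ) : ℤ) ((lam i : ℤ) - (i : ℕ) + (j : ℕ)))) := by
  unfold truncEntry mzvStarSeq
  split_ifs with hneg
  · exact tendsto_const_nhds
  have hli : 0 < lam i := (hlam.2 i).2 i.2
  refine tendsto_truncStar a _ _ (fun t ht => ?_) (fun hL => ?_)
  · -- The content `-j + t` occurs in the first column if it is at most `0`, else in the first row.
    have h0 : lam i ≤ lam 0 := hlam.1 (Nat.zero_le _)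
    rcases le_total (-(j : ℕ) + t : ℤ) 0 with hc | hc
    · have hb : InDiag lam ((j : ℕ) - t, 0) := (hlam.2 _).2 (by have := j.2; omega)
      have := h1 _ hb
      rw [hdiag _ hb] at this
      convert this using 4
      simp only
      omega
    · have hb : InDiag lam (0, t - (j : ℕ)) := by
        change t - (j : ℕ) < lam 0
        omega
      have := h1 _ hb
      rw [hdiag _ hb] at this
      convert this using 4
      simp only
      omega
  · have := h2 i i.2
    rw [hdiag _ (show InDiag lam ((i : ℕ), lam i - 1) from Nat.sub_lt hli one_pos)] at this
    convert this using 4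
    simp only
    omega

end SMZ

/-- Jacobi–Trudi formula of `H`-type for Schur multiple zeta functions. -/
theorem schurZeta_jacobiTrudi_H
    (r : ℕ) (lam : ℕ → ℕ) (hlam : SMZ.IsPartitionWith r lam)
    (s : ℕ × ℕ → ℂ) (a : ℤ → ℂ)
    (hW : SMZ.MemW lam s)
    (hdiag : ∀ p : ℕ × ℕ, SMZ.InDiag lam p → s p = a ((p.2 : ℤ) - (p.1 : ℤ)))
    (hre : ∀ i < r, 1 < (s (i, lam i - 1)).re) :
    SMZ.schurZeta r lam s =
      Matrix.det (Matrix.of fun i j : Fin r =>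
        SMZ.mzvStarSeq a (-(j : ℕ) : ℤ)
          ((lam (i : ℕ) : ℤ) - ((i : ℕ) : ℤ) + ((j : ℕ) : ℤ))) := by
  have hzero : ∀ i, r ≤ i → lam i = 0 := fun i hi => by
    have := (hlam.2 i).1; omega
  have hleft := SMZ.tendsto_truncSchur r lam hlam s a hdiag hW.1 hre
  refine tendsto_nhds_unique hleft ?_
  have hright : Filter.Tendsto
      (fun N => SMZ.jtMatrix (fun m c => (m : ℂ) ^ (-(a c))) r lam N) Filter.atTop
      (nhds (Matrix.of fun i j : Fin r =>
        SMZ.mzvStarSeq a (-(j : ℕ) : ℤ)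
          ((lam (i : ℕ) : ℤ) - ((i : ℕ) : ℤ) + ((j : ℕ) : ℤ)))) :=
    tendsto_pi_nhds.2 fun i => tendsto_pi_nhds.2 fun j =>
      SMZ.tendsto_truncEntry r lam hlam s a hdiag hW.1 hre i j
  have hdet := ((continuous_id.matrix_det).tendsto _).comp hright
  refine hdet.congr fun N => ?_
  exact (SMZ.truncSchur_eq_det _ r N lam hlam.1 hzero).symm
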